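/- arXiv:2510.12034 — 4 statements merged into one kernel-verified Lean document; each statement's English description precedes it below -/
import Mathlib

section
/- Let N be an ℕ-valued random variable with E[N] = 1 and E[N²] < ∞, and let D ≥ 0 be a random variable, on a common probability space; set Φ_t(x) = E[e^{−tD} · x^N] for t ≥ 0 and x ∈ [0,1]. Then for every ε > 0 there exists δ > 0 such that for every t ≥ 0 and every x ∈ [1−δ, 1]: |Φ_t(x) − x − E[e^{−tD} − 1] − (x−1)·(E[N·e^{−tD}] − 1) − ((x−1)²/2)·E[(N² − N)·e^{−tD}]| ≤ ε·(x−1)². -/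
open MeasureTheory ProbabilityTheory Filter

/-!
Multiplied by the weight `e^{-tD}`, the second order Taylor remainder of `x ↦ x ^ N` at `x = 1`
has expectation equal to the error to be estimated. As `0 ≤ e^{-tD} ≤ 1`, this error is at most
the expected absolute value of the remainder, which no longer involves `t`. Divided by
`(x - 1) ^ 2`, the remainder is bounded by `N ^ 2` and tends to `0` as `x → 1`, so dominated
convergence applies.
-/

open Asymptotics Topology

/-- The second order Taylor remainder of `x ↦ x ^ n` at `x = 1`. The binomial coefficient
`n.choose 2` is written as `(n ^ 2 - n) / 2`, so that second moments of a random exponent appear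
directly. -/
noncomputable def powTaylorRemainder (n : ℕ) (x : ℝ) : ℝ :=
  x ^ n - 1 - (x - 1) * n - (x - 1) ^ 2 / 2 * ((n : ℝ) ^ 2 - n)

lemma powTaylorRemainder_succ (n : ℕ) (x : ℝ) :
    powTaylorRemainder (n + 1) x
      = powTaylorRemainder n x + (x - 1) * (x ^ n - 1 - (x - 1) * n) := by
  simp only [powTaylorRemainder]
  push_cast
  ring

lemma abs_pow_sub_one_sub_mul_le {x : ℝ} (hx : |x| ≤ 1) (n : ℕ) :
    |x ^ n - 1 - (x - 1) * n| ≤ n * |x - 1| := by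
  have bernoulli : 1 + n * (x - 1) ≤ x ^ n := by
    simpa using one_add_mul_le_pow (a := x - 1) (by linarith [neg_le_of_abs_le hx]) n
  have pow_le_one : x ^ n ≤ 1 :=
    (le_abs_self _).trans (by simpa only [abs_pow] using pow_le_one₀ (abs_nonneg x) hx)
  rw [abs_of_nonneg (by linarith), abs_of_nonpos (by linarith [le_of_abs_le hx])]
  linarith

lemma abs_powTaylorRemainder_le {x : ℝ} (hx : |x| ≤ 1) (n : ℕ) :
    |powTaylorRemainder n x| ≤ (n : ℝ) ^ 2 * (x - 1) ^ 2 := by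
  induction n with
  | zero => simp [powTaylorRemainder]
  | succ n ih =>
    calc |powTaylorRemainder (n + 1) x|
        ≤ |powTaylorRemainder n x| + |x - 1| * |x ^ n - 1 - (x - 1) * n| := by
          rw [powTaylorRemainder_succ, ← abs_mul]
          exact abs_add_le _ _
      _ ≤ (n : ℝ) ^ 2 * (x - 1) ^ 2 + |x - 1| * (n * |x - 1|) := by
          gcongr
          exact abs_pow_sub_one_sub_mul_le hx n
      _ = ((n : ℝ) ^ 2 + n) * (x - 1) ^ 2 := by
          rw [← sq_abs (x - 1)]
          ring
      _ ≤ ((n + 1 : ℕ) : ℝ) ^ 2 * (x - 1) ^ 2 := by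
          gcongr
          push_cast
          nlinarith [n.cast_nonneg (α := ℝ)]

lemma powTaylorRemainder_isLittleO (n : ℕ) :
    powTaylorRemainder n =o[𝓝 1] fun x => (x - 1) ^ 2 := by
  induction n with
  | zero =>
    refine (isLittleO_zero (E' := ℝ) _ _).congr_left fun x => ?_
    simp [powTaylorRemainder]
  | succ n ih =>
    have first_order : (fun x : ℝ => x ^ n - 1 - (x - 1) * n) =o[𝓝 1] fun x => x - 1 := by
      simpa using (hasDerivAt_pow n (1 : ℝ)).isLittleO
    have product := (isBigO_refl (fun x : ℝ => x - 1) (𝓝 1)).mul_isLittleO first_order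
    simp only [← sq] at product
    exact (ih.add product).congr_left fun x => (powTaylorRemainder_succ n x).symm

lemma eventually_abs_le_one_nhdsLE_one : ∀ᶠ x : ℝ in 𝓝[≤] 1, |x| ≤ 1 := by
  filter_upwards [Icc_mem_nhdsLE (show (-1 : ℝ) < 1 by norm_num)] with x hx
  exact abs_le.mpr hx

lemma abs_exp_neg_mul_le_one {t d : ℝ} (ht : 0 ≤ t) (hd : 0 ≤ d) : |Real.exp (-t * d)| ≤ 1 := by
  rw [Real.abs_exp, Real.exp_le_one_iff, neg_mul]
  exact neg_nonpos.mpr (mul_nonneg ht hd)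

section RandomExponent

variable {Ω : Type*} [MeasurableSpace Ω] {P : Measure Ω} {N : Ω → ℕ}

lemma aestronglyMeasurable_comp_natValued (hN : AEMeasurable N P) (f : ℕ → ℝ) :
    AEStronglyMeasurable (fun ω => f (N ω)) P :=
  ((Measurable.of_discrete (f := f)).comp_aemeasurable hN).aestronglyMeasurable

lemma integrable_natCast_of_sq (hN : AEMeasurable N P)
    (hN2 : Integrable (fun ω => (N ω : ℝ) ^ 2) P) : Integrable (fun ω => (N ω : ℝ)) P := by
  refine hN2.mono' (aestronglyMeasurable_comp_natValued hN _) (ae_of_all _ fun ω => ?_)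
  rw [Real.norm_natCast]
  exact_mod_cast Nat.le_self_pow two_ne_zero (N ω)

lemma integrable_powTaylorRemainder (hN : AEMeasurable N P)
    (hN2 : Integrable (fun ω => (N ω : ℝ) ^ 2) P) {x : ℝ} (hx : |x| ≤ 1) :
    Integrable (fun ω => powTaylorRemainder (N ω) x) P :=
  (hN2.mul_const ((x - 1) ^ 2)).mono'
    (aestronglyMeasurable_comp_natValued hN fun n => powTaylorRemainder n x)
    (ae_of_all _ fun ω => abs_powTaylorRemainder_le hx (N ω))

lemma integrable_pow_natValued [IsFiniteMeasure P] (hN : AEMeasurable N P) {x : ℝ}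
    (hx : |x| ≤ 1) : Integrable (fun ω => x ^ N ω) P := by
  refine (integrable_const (1 : ℝ)).mono' (aestronglyMeasurable_comp_natValued hN _)
    (ae_of_all _ fun ω => ?_)
  rw [norm_pow]
  exact pow_le_one₀ (norm_nonneg x) hx

lemma integral_abs_powTaylorRemainder_isLittleO (hN : AEMeasurable N P)
    (hN2 : Integrable (fun ω => (N ω : ℝ) ^ 2) P) :
    (fun x => ∫ ω, |powTaylorRemainder (N ω) x| ∂P) =o[𝓝[≤] 1] fun x => (x - 1) ^ 2 := by
  have quotient_tendsto : Tendsto (fun x => ∫ ω, |powTaylorRemainder (N ω) x| / (x - 1) ^ 2 ∂P)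
      (𝓝[≤] 1) (𝓝 (∫ _, (0 : ℝ) ∂P)) := by
    refine tendsto_integral_filter_of_dominated_convergence (fun ω => (N ω : ℝ) ^ 2)
      (.of_forall fun x => aestronglyMeasurable_comp_natValued hN
        fun n => |powTaylorRemainder n x| / (x - 1) ^ 2) ?_ hN2 (ae_of_all _ fun ω => ?_)
    · filter_upwards [eventually_abs_le_one_nhdsLE_one] with x hx
      refine ae_of_all _ fun ω => ?_
      rw [Real.norm_of_nonneg (by positivity)]
      exact div_le_of_le_mul₀ (sq_nonneg _) (sq_nonneg _) (abs_powTaylorRemainder_le hx (N ω))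
    · exact ((powTaylorRemainder_isLittleO (N ω)).mono nhdsWithin_le_nhds).abs_left
        |>.tendsto_div_nhds_zero
  simp only [integral_div, integral_zero] at quotient_tendsto
  refine isLittleO_of_tendsto (fun x hx => ?_) quotient_tendsto
  simp [sub_eq_zero.mp (sq_eq_zero_iff.mp hx), powTaylorRemainder]

lemma exists_integral_abs_powTaylorRemainder_le (hN : AEMeasurable N P)
    (hN2 : Integrable (fun ω => (N ω : ℝ) ^ 2) P) {ε : ℝ} (hε : 0 < ε) :
    ∃ δ : ℝ, 0 < δ ∧ ∀ x ∈ Set.Icc (1 - δ) (1 : ℝ),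
      |x| ≤ 1 ∧ ∫ ω, |powTaylorRemainder (N ω) x| ∂P ≤ ε * (x - 1) ^ 2 := by
  have small := (integral_abs_powTaylorRemainder_isLittleO hN hN2).bound hε
  obtain ⟨l, hl, hIcc⟩ := mem_nhdsLE_iff_exists_Icc_subset.mp
    (eventually_abs_le_one_nhdsLE_one.and small)
  refine ⟨1 - l, sub_pos.mpr hl, fun x hx => ?_⟩
  obtain ⟨habs, hle⟩ := hIcc (by simpa using hx)
  exact ⟨habs, by simpa using (le_abs_self _).trans hle⟩

lemma abs_integral_mul_le_integral_abs {W f : Ω → ℝ} (hW1 : ∀ᵐ ω ∂P, |W ω| ≤ 1)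
    (hf : Integrable f P) : |∫ ω, W ω * f ω ∂P| ≤ ∫ ω, |f ω| ∂P := by
  refine norm_integral_le_of_norm_le (f := fun ω => W ω * f ω) hf.abs ?_
  filter_upwards [hW1] with ω hω
  rw [norm_mul]
  exact mul_le_of_le_one_left (abs_nonneg _) hω

lemma integral_mul_powTaylorRemainder [IsFiniteMeasure P] (hN : AEMeasurable N P)
    (hN2 : Integrable (fun ω => (N ω : ℝ) ^ 2) P) {W : Ω → ℝ} (hW : AEStronglyMeasurable W P)
    (hW1 : ∀ᵐ ω ∂P, |W ω| ≤ 1) {x : ℝ} (hx : |x| ≤ 1) :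
    ∫ ω, W ω * powTaylorRemainder (N ω) x ∂P
      = (∫ ω, W ω * x ^ N ω ∂P) - (∫ ω, W ω ∂P) - (x - 1) * (∫ ω, (N ω : ℝ) * W ω ∂P)
        - (x - 1) ^ 2 / 2 * ∫ ω, ((N ω : ℝ) ^ 2 - N ω) * W ω ∂P := by
  have hNi := integrable_natCast_of_sq hN hN2
  have iW : Integrable W P := .of_bound hW 1 hW1
  have iPow : Integrable (fun ω => W ω * x ^ N ω) P :=
    (integrable_pow_natValued hN hx).bdd_mul hW hW1
  have iLin : Integrable (fun ω => (x - 1) * ((N ω : ℝ) * W ω)) P :=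
    (hNi.mul_bdd hW hW1).const_mul _
  have iQuad : Integrable (fun ω => (x - 1) ^ 2 / 2 * (((N ω : ℝ) ^ 2 - N ω) * W ω)) P :=
    ((hN2.sub hNi).mul_bdd hW hW1).const_mul _
  rw [← integral_const_mul, ← integral_const_mul, ← integral_sub iPow iW,
    ← integral_sub (iPow.sub' iW) iLin, ← integral_sub ((iPow.sub' iW).sub' iLin) iQuad]
  refine integral_congr_ae (ae_of_all _ fun ω => ?_)
  simp only [powTaylorRemainder]
  ring

end RandomExponent

theorem phi_t_taylor_expansion_general
    {Ω : Type*} [MeasurableSpace Ω] {P : Measure Ω} [IsProbabilityMeasure P] {N : Ω → ℕ}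
    (hN : AEMeasurable N P) (hN2 : Integrable (fun ω => (N ω : ℝ) ^ 2) P) {ε : ℝ} (hε : 0 < ε) :
    ∃ δ : ℝ, 0 < δ ∧ ∀ W : Ω → ℝ, AEStronglyMeasurable W P → (∀ᵐ ω ∂P, |W ω| ≤ 1) →
      ∀ x ∈ Set.Icc (1 - δ) (1 : ℝ),
        |(∫ ω, W ω * x ^ N ω ∂P) - x - (∫ ω, (W ω - 1) ∂P)
            - (x - 1) * ((∫ ω, (N ω : ℝ) * W ω ∂P) - 1)
            - (x - 1) ^ 2 / 2 * ∫ ω, ((N ω : ℝ) ^ 2 - (N ω : ℝ)) * W ω ∂P|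
          ≤ ε * (x - 1) ^ 2 := by
  obtain ⟨δ, hδ, remainder_le⟩ := exists_integral_abs_powTaylorRemainder_le hN hN2 hε
  refine ⟨δ, hδ, fun W hW hW1 x hx => ?_⟩
  obtain ⟨habs, hle⟩ := remainder_le x hx
  have integral_sub_one : ∫ ω, (W ω - 1) ∂P = (∫ ω, W ω ∂P) - 1 := by
    simpa using integral_sub (Integrable.of_bound hW 1 hW1) (integrable_const (1 : ℝ))
  calc _ = |∫ ω, W ω * powTaylorRemainder (N ω) x ∂P| := by
        rw [integral_sub_one, integral_mul_powTaylorRemainder hN hN2 hW hW1 habs]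
        congr 1
        ring
    _ ≤ ∫ ω, |powTaylorRemainder (N ω) x| ∂P :=
        abs_integral_mul_le_integral_abs hW1 (integrable_powTaylorRemainder hN hN2 habs)
    _ ≤ ε * (x - 1) ^ 2 := hle

/-- Taylor expansion of `Φ_t` near `x = 1`, uniform in `t ≥ 0`; part of
Lemma 25 of the paper.  Let `N` be `ℕ`-valued with `E[N] = 1` and `E[N²] < ∞`, `D ≥ 0`, and
`Φ_t(x) = E[e^{−tD}·x^N]`.  For every `ε > 0` there is `δ > 0` such that for all `t ≥ 0` and
`x ∈ [1−δ,1]`: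
`|Φ_t(x) − x − E[e^{−tD} − 1] − (x−1)·(E[N·e^{−tD}] − 1)
  − ((x−1)²/2)·E[(N² − N)·e^{−tD}]| ≤ ε·(x−1)²`. -/
theorem phi_t_taylor_expansion
    {Ω : Type*} [MeasurableSpace Ω] (P : Measure Ω) [IsProbabilityMeasure P]
    (N : Ω → ℕ) (D : Ω → ℝ) (hNm : Measurable N) (hDm : Measurable D)
    (hN1 : ∫ ω, (N ω : ℝ) ∂P = 1)
    (hN2 : Integrable (fun ω => ((N ω : ℝ)) ^ 2) P)
    (hD0 : ∀ᵐ ω ∂P, 0 ≤ D ω) :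
    ∀ ε : ℝ, 0 < ε → ∃ δ : ℝ, 0 < δ ∧ ∀ t : ℝ, 0 ≤ t → ∀ x ∈ Set.Icc (1 - δ) (1 : ℝ),
      |(∫ ω, Real.exp (-t * D ω) * x ^ (N ω) ∂P) - x
          - (∫ ω, (Real.exp (-t * D ω) - 1) ∂P)
          - (x - 1) * ((∫ ω, (N ω : ℝ) * Real.exp (-t * D ω) ∂P) - 1)
          - (x - 1) ^ 2 / 2 *
              ∫ ω, ((N ω : ℝ) ^ 2 - (N ω : ℝ)) * Real.exp (-t * D ω) ∂P|
        ≤ ε * (x - 1) ^ 2 := by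
  intro ε hε
  obtain ⟨δ, hδ, h⟩ := phi_t_taylor_expansion_general hNm.aemeasurable hN2 hε
  exact ⟨δ, hδ, fun t ht => h _ (by fun_prop) (hD0.mono fun _ => abs_exp_neg_mul_le_one ht)⟩
end

section
/- Let N be an ℕ-valued random variable with E[N] = 1 and E[N²] = 1 + σ² where σ² ∈ (0,∞), and let D ≥ 0 be a random variable with E[D] = 1, on a common probability space. Then for every t > 0 there is exactly one x_t ∈ [0,1] satisfying x_t = E[e^{−tD} · x_t^N]; it lies in (0,1); and (1 − x_t)·√(σ²/(2t)) → 1 as t → 0⁺. -/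
open MeasureTheory ProbabilityTheory Filter

/-!
The map `f_t x = E[e^{-tD} x^N]` is convex and continuous on `[0, 1]`, with `0 < f_t 0` and
`f_t 1 < 1`, so its graph crosses the diagonal exactly once. Expanding `x ^ N` to second order
at `1` and using `E[N] = 1`, the fixed point equation becomes
`(1 - x)² A(x) = E[(1 - e^{-tD}) x^N]`, where `A` is increasing and continuous on `[0, 1]`,
`A 0 = P(N = 0) > 0` and `A 1 = E[N(N - 1)/2] = σ²/2`. Since the right-hand side is at most
`t E[D]`, the fixed point tends to `1`; dividing by `t` then gives
`(1 - x_t)² / t → 2 E[D] / σ²` by dominated convergence.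
-/

open Set Function
open scoped Topology

section FixedPoints

theorem mem_Ioo_of_isFixedPt {α : Type*} [PartialOrder α] {f : α → α} {a b x : α}
    (ha : a < f a) (hb : f b < b) (hx : x ∈ Icc a b) (hfx : IsFixedPt f x) : x ∈ Ioo a b := by
  refine ⟨lt_of_le_of_ne hx.1 ?_, lt_of_le_of_ne hx.2 ?_⟩
  · rintro rfl
    exact ha.ne' hfx
  · rintro rfl
    exact hb.ne hfx

theorem le_of_isFixedPt_of_convexOn_Icc {f : ℝ → ℝ} {a b x y : ℝ} (hf : ConvexOn ℝ (Icc a b) f)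
    (hb : f b < b) (hx : x ∈ Icc a b) (hy : y ∈ Icc a b) (hfx : IsFixedPt f x)
    (hfy : IsFixedPt f y) : y ≤ x := by
  by_contra! hxy
  have hyb : y < b := lt_of_le_of_ne hy.2 fun h => hb.ne (h ▸ hfy)
  have hslope := hf.slope_mono_adjacent hx (right_mem_Icc.2 (hx.1.trans hx.2)) hxy hyb
  rw [hfx.eq, hfy.eq, div_self (sub_pos.2 hxy).ne', one_le_div (sub_pos.2 hyb)] at hslope
  linarith

theorem existsUnique_isFixedPt_of_convexOn_Icc {f : ℝ → ℝ} {a b : ℝ}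
    (hf : ConvexOn ℝ (Icc a b) f) (hcont : ContinuousOn f (Icc a b)) (hab : a ≤ b)
    (ha : a ≤ f a) (hb : f b < b) : ∃! x, x ∈ Icc a b ∧ IsFixedPt f x := by
  obtain ⟨x, hx, hfx⟩ := exists_mem_Icc_isFixedPt hcont hab ha hb.le
  exact ⟨x, ⟨hx, hfx⟩, fun y ⟨hy, hfy⟩ =>
    (le_of_isFixedPt_of_convexOn_Icc hf hb hx hy hfx hfy).antisymm
      (le_of_isFixedPt_of_convexOn_Icc hf hb hy hx hfy hfx)⟩

end FixedPoints

section PowRemainder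

/-- The coefficient of `(1 - x) ^ 2` in the second-order expansion of `x ^ n` at `1`, written as a
polynomial so that it also makes sense at `x = 1`; see `one_sub_sq_mul_powRemainder`. -/
def powRemainder {R : Type*} [Semiring R] (n : ℕ) (x : R) : R :=
  ∑ j ∈ Finset.range n, ∑ i ∈ Finset.range j, x ^ i

theorem one_sub_sq_mul_powRemainder {R : Type*} [CommRing R] (n : ℕ) (x : R) :
    (1 - x) ^ 2 * powRemainder n x = x ^ n - 1 + n * (1 - x) := by
  induction n with
  | zero => simp [powRemainder]
  | succ k ih =>
    have hsucc : powRemainder (k + 1) x = powRemainder k x + ∑ i ∈ Finset.range k, x ^ i :=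
      Finset.sum_range_succ _ k
    rw [hsucc, mul_add, ih, sq, mul_assoc, mul_neg_geom_sum]
    push_cast
    ring

theorem powRemainder_one {R : Type*} [Semiring R] (n : ℕ) :
    powRemainder n (1 : R) = n.choose 2 := by
  rw [Nat.choose_two_right, ← Finset.sum_range_id]
  simp [powRemainder]

theorem powRemainder_nonneg {R : Type*} [Semiring R] [PartialOrder R] [IsOrderedRing R] (n : ℕ)
    {x : R} (hx : 0 ≤ x) : 0 ≤ powRemainder n x :=
  Finset.sum_nonneg fun _ _ => Finset.sum_nonneg fun _ _ => pow_nonneg hx _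

theorem monotoneOn_powRemainder {R : Type*} [Semiring R] [PartialOrder R] [IsOrderedRing R]
    (n : ℕ) : MonotoneOn (powRemainder n) (Ici (0 : R)) := by
  intro x (hx : 0 ≤ x) y _ hxy
  unfold powRemainder
  gcongr

theorem continuous_powRemainder {R : Type*} [Semiring R] [TopologicalSpace R]
    [IsTopologicalSemiring R] (n : ℕ) : Continuous (powRemainder n : R → R) := by
  unfold powRemainder
  fun_prop

end PowRemainder

section Exponential

theorem abs_one_sub_exp_neg_mul_div_le {t d : ℝ} (ht : 0 < t) (hd : 0 ≤ d) :
    |(1 - Real.exp (-t * d)) / t| ≤ d := by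
  have hexp : Real.exp (-t * d) ≤ 1 := Real.exp_le_one_iff.2 (by nlinarith)
  rw [abs_of_nonneg (div_nonneg (sub_nonneg.2 hexp) ht.le), div_le_iff₀ ht]
  linarith [Real.add_one_le_exp (-t * d)]

theorem tendsto_one_sub_exp_neg_mul_div (d : ℝ) :
    Tendsto (fun t : ℝ => (1 - Real.exp (-t * d)) / t) (𝓝[≠] 0) (𝓝 d) := by
  have hderiv : HasDerivAt (fun t : ℝ => 1 - Real.exp (-t * d)) d 0 := by
    simpa using ((((hasDerivAt_id (0 : ℝ)).neg).mul_const d).exp).const_sub 1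
  simpa [div_eq_inv_mul] using hasDerivAt_iff_tendsto_slope_zero.1 hderiv

end Exponential

section Probability

variable {Ω : Type*} [MeasurableSpace Ω] {P : Measure Ω} {N : Ω → ℕ} {V W D : Ω → ℝ} {x : ℝ}

section WeightedPGF

/-- The probability generating function `x ↦ E[W x^N]` of an `ℕ`-valued random variable `N`,
weighted by a real random variable `W`. The paper's fixed point map is the case `W = e^{-tD}`. -/
noncomputable def weightedPGF (P : Measure Ω) (W : Ω → ℝ) (N : Ω → ℕ) (x : ℝ) : ℝ :=
  ∫ ω, W ω * x ^ N ω ∂P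

theorem aestronglyMeasurable_comp_nat (hN : AEMeasurable N P) (F : ℕ → ℝ) :
    AEStronglyMeasurable (fun ω => F (N ω)) P :=
  (measurable_of_countable F).comp_aemeasurable hN |>.aestronglyMeasurable

theorem abs_le_one_of_mem_Icc (hx : x ∈ Icc 0 1) : |x| ≤ 1 :=
  (abs_of_nonneg hx.1).trans_le hx.2

theorem abs_mul_pow_le (w : ℝ) (n : ℕ) (hx : |x| ≤ 1) : |w * x ^ n| ≤ |w| := by
  rw [abs_mul, abs_pow]
  exact mul_le_of_le_one_right (abs_nonneg w) (pow_le_one₀ (abs_nonneg x) hx)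

theorem integrable_mul_pow (hN : AEMeasurable N P) (hW : Integrable W P) (hx : |x| ≤ 1) :
    Integrable (fun ω => W ω * x ^ N ω) P :=
  hW.mono (hW.aestronglyMeasurable.mul (aestronglyMeasurable_comp_nat hN (x ^ ·)))
    (ae_of_all _ fun ω => abs_mul_pow_le (W ω) (N ω) hx)

theorem weightedPGF_one_right : weightedPGF P W N 1 = ∫ ω, W ω ∂P := by
  simp [weightedPGF]

theorem weightedPGF_sub (hN : AEMeasurable N P) (hV : Integrable V P) (hW : Integrable W P)
    (hx : |x| ≤ 1) :
    weightedPGF P (fun ω => V ω - W ω) N x = weightedPGF P V N x - weightedPGF P W N x := by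
  simp only [weightedPGF, sub_mul]
  exact integral_sub (integrable_mul_pow hN hV hx) (integrable_mul_pow hN hW hx)

theorem weightedPGF_div (c : ℝ) :
    weightedPGF P (fun ω => W ω / c) N x = weightedPGF P W N x / c := by
  simp only [weightedPGF, div_mul_eq_mul_div, integral_div]

theorem abs_weightedPGF_le (hV : Integrable V P) (hWV : ∀ᵐ ω ∂P, |W ω| ≤ V ω) (hx : |x| ≤ 1) :
    |weightedPGF P W N x| ≤ ∫ ω, V ω ∂P := by
  refine norm_integral_le_of_norm_le (f := fun ω => W ω * x ^ N ω) hV ?_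
  filter_upwards [hWV] with ω hω using (abs_mul_pow_le _ _ hx).trans hω

theorem weightedPGF_zero_nonneg (hW0 : 0 ≤ᵐ[P] W) : 0 ≤ weightedPGF P W N 0 := by
  refine integral_nonneg_of_ae ?_
  filter_upwards [hW0] with ω hω using mul_nonneg hω (pow_nonneg le_rfl _)

theorem weightedPGF_zero_pos (hN : AEMeasurable N P) (hW : Integrable W P)
    (hW0 : ∀ᵐ ω ∂P, 0 < W ω) (hN0 : ∃ᶠ ω in ae P, N ω = 0) : 0 < weightedPGF P W N 0 := by
  have hnonneg : 0 ≤ᵐ[P] fun ω => W ω * (0 : ℝ) ^ N ω := by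
    filter_upwards [hW0] with ω hω using mul_nonneg hω.le (pow_nonneg le_rfl _)
  refine (integral_nonneg_of_ae hnonneg).lt_of_ne' fun hzero => ?_
  have hae := (integral_eq_zero_iff_of_nonneg_ae hnonneg
    (integrable_mul_pow hN hW (by simp))).1 hzero
  obtain ⟨ω, hω, hWω, hprod⟩ := (hN0.and_eventually (hW0.and hae)).exists
  exact hWω.ne' (by simpa [hω] using hprod)

theorem convexOn_weightedPGF (hN : AEMeasurable N P) (hW : Integrable W P) (hW0 : 0 ≤ᵐ[P] W) :
    ConvexOn ℝ (Icc 0 1) (weightedPGF P W N) := by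
  refine integral_convexOn_of_integrand_ae (convex_Icc 0 1) ?_ fun x hx =>
    integrable_mul_pow hN hW (abs_le_one_of_mem_Icc hx)
  filter_upwards [hW0] with ω hω
  exact ((convexOn_pow (N ω)).subset Icc_subset_Ici_self (convex_Icc 0 1)).smul hω

theorem tendsto_weightedPGF {ι : Type*} {l : Filter ι} [l.IsCountablyGenerated]
    {w : ι → Ω → ℝ} {bound : Ω → ℝ} {y : ι → ℝ} (hN : AEMeasurable N P)
    (hw : ∀ᶠ i in l, AEStronglyMeasurable (w i) P)
    (hw_le : ∀ᶠ i in l, ∀ᵐ ω ∂P, |w i ω| ≤ bound ω) (hbound : Integrable bound P)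
    (hw_lim : ∀ᵐ ω ∂P, Tendsto (w · ω) l (𝓝 (W ω)))
    (hy : ∀ᶠ i in l, |y i| ≤ 1) (hy_lim : Tendsto y l (𝓝 x)) :
    Tendsto (fun i => weightedPGF P (w i) N (y i)) l (𝓝 (weightedPGF P W N x)) := by
  refine tendsto_integral_filter_of_dominated_convergence bound ?_ ?_ hbound ?_
  · filter_upwards [hw] with i hi
    exact hi.mul (aestronglyMeasurable_comp_nat hN (y i ^ ·))
  · filter_upwards [hw_le, hy] with i hwi hyi
    filter_upwards [hwi] with ω hω using (abs_mul_pow_le _ _ hyi).trans hω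
  · filter_upwards [hw_lim] with ω hω
    exact hω.mul (hy_lim.pow (N ω))

theorem continuousOn_weightedPGF (hN : AEMeasurable N P) (hW : Integrable W P) :
    ContinuousOn (weightedPGF P W N) (Icc (-1) 1) := fun _ _ =>
  tendsto_weightedPGF hN (.of_forall fun _ => hW.aestronglyMeasurable)
    (.of_forall fun _ => ae_of_all _ fun _ => le_rfl) hW.abs
    (ae_of_all _ fun _ => tendsto_const_nhds)
    (eventually_mem_nhdsWithin.mono fun _ hy => abs_le.2 hy) nhdsWithin_le_nhds

theorem existsUnique_isFixedPt_weightedPGF (hN : AEMeasurable N P) (hW : Integrable W P)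
    (hW0 : 0 ≤ᵐ[P] W) (hW1 : ∫ ω, W ω ∂P < 1) :
    ∃! x, x ∈ Icc 0 1 ∧ IsFixedPt (weightedPGF P W N) x :=
  existsUnique_isFixedPt_of_convexOn_Icc (convexOn_weightedPGF hN hW hW0)
    ((continuousOn_weightedPGF hN hW).mono (Icc_subset_Icc_left (by norm_num))) zero_le_one
    (weightedPGF_zero_nonneg hW0) (weightedPGF_one_right.trans_lt hW1)

end WeightedPGF

section PGFRemainder

/-- The coefficient `E[powRemainder N x]` of `(1 - x) ^ 2` in the second-order expansion at `1` of
the probability generating function of `N`. -/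
noncomputable def pgfRemainder (P : Measure Ω) (N : Ω → ℕ) (x : ℝ) : ℝ :=
  ∫ ω, powRemainder (N ω) x ∂P

theorem aemeasurable_of_natCast (hN : AEMeasurable (fun ω => (N ω : ℝ)) P) : AEMeasurable N P := by
  simpa [comp_def] using Nat.measurable_floor.comp_aemeasurable hN

variable [IsFiniteMeasure P]

theorem integrable_choose_two (hN : MemLp (fun ω => (N ω : ℝ)) 2 P) :
    Integrable (fun ω => ((N ω).choose 2 : ℝ)) P := by
  simp_rw [Nat.cast_choose_two, mul_sub, mul_one, ← sq]
  exact (hN.integrable_sq.sub (hN.integrable one_le_two)).div_const 2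

theorem norm_powRemainder_le_choose_two (n : ℕ) (hx : x ∈ Icc 0 1) :
    ‖powRemainder n x‖ ≤ n.choose 2 := by
  rw [Real.norm_of_nonneg (powRemainder_nonneg n hx.1), ← powRemainder_one]
  exact monotoneOn_powRemainder n hx.1 (mem_Ici.2 zero_le_one) hx.2

theorem integrable_powRemainder (hN : MemLp (fun ω => (N ω : ℝ)) 2 P) (hx : x ∈ Icc 0 1) :
    Integrable (fun ω => powRemainder (N ω) x) P :=
  (integrable_choose_two hN).mono'
    (aestronglyMeasurable_comp_nat (aemeasurable_of_natCast hN.aemeasurable) (powRemainder · x))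
    (ae_of_all _ fun ω => norm_powRemainder_le_choose_two (N ω) hx)

theorem monotoneOn_pgfRemainder (hN : MemLp (fun ω => (N ω : ℝ)) 2 P) :
    MonotoneOn (pgfRemainder P N) (Icc 0 1) :=
  integral_monotoneOn_of_integrand_ae
    (ae_of_all _ fun ω => (monotoneOn_powRemainder (N ω)).mono Icc_subset_Ici_self)
    fun _ hx => integrable_powRemainder hN hx

theorem continuousOn_pgfRemainder (hN : MemLp (fun ω => (N ω : ℝ)) 2 P) :
    ContinuousOn (pgfRemainder P N) (Icc 0 1) :=
  continuousOn_of_dominated (fun _ hx => (integrable_powRemainder hN hx).aestronglyMeasurable)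
    (fun _ hx => ae_of_all _ fun ω => norm_powRemainder_le_choose_two (N ω) hx)
    (integrable_choose_two hN)
    (ae_of_all _ fun ω => (continuous_powRemainder (N ω)).continuousOn)

theorem pgfRemainder_one (hN : MemLp (fun ω => (N ω : ℝ)) 2 P) :
    pgfRemainder P N 1 = ((∫ ω, (N ω : ℝ) ^ 2 ∂P) - ∫ ω, (N ω : ℝ) ∂P) / 2 := by
  simp_rw [pgfRemainder, powRemainder_one, Nat.cast_choose_two, mul_sub, mul_one, ← sq]
  rw [integral_div, integral_sub hN.integrable_sq (hN.integrable one_le_two)]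

end PGFRemainder

section SecondOrderExpansion

variable [IsProbabilityMeasure P]

theorem one_sub_sq_mul_pgfRemainder (hN : Integrable (fun ω => (N ω : ℝ)) P) (hx : |x| ≤ 1) :
    (1 - x) ^ 2 * pgfRemainder P N x =
      weightedPGF P (fun _ => 1) N x - 1 + (∫ ω, (N ω : ℝ) ∂P) * (1 - x) := by
  have hpow : Integrable (fun ω => x ^ N ω) P := by
    simpa using integrable_mul_pow (aemeasurable_of_natCast hN.aemeasurable)
      (integrable_const (1 : ℝ)) hx
  simp_rw [pgfRemainder, ← integral_const_mul, one_sub_sq_mul_powRemainder]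
  rw [integral_add (f := fun ω => x ^ N ω - 1) (hpow.sub (integrable_const 1)) (hN.mul_const _),
    integral_sub hpow (integrable_const 1), integral_mul_const]
  simp [weightedPGF]

theorem one_sub_sq_mul_pgfRemainder_of_isFixedPt (hN1 : ∫ ω, (N ω : ℝ) ∂P = 1)
    (hW : Integrable W P) (hx : |x| ≤ 1) (hfx : IsFixedPt (weightedPGF P W N) x) :
    (1 - x) ^ 2 * pgfRemainder P N x = weightedPGF P (fun ω => 1 - W ω) N x := by
  have hN : Integrable (fun ω => (N ω : ℝ)) P := .of_integral_ne_zero (by simp [hN1])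
  rw [one_sub_sq_mul_pgfRemainder hN hx, hN1,
    weightedPGF_sub (aemeasurable_of_natCast hN.aemeasurable) (integrable_const 1) hW hx, hfx.eq]
  ring

theorem frequently_eq_zero_of_integral_eq_one (hN1 : ∫ ω, (N ω : ℝ) ∂P = 1)
    (hN2 : ∫ ω, (N ω : ℝ) ^ 2 ∂P ≠ 1) : ∃ᶠ ω in ae P, N ω = 0 := by
  intro hpos
  have hone_le : (fun _ => 1) ≤ᵐ[P] fun ω => (N ω : ℝ) := by
    filter_upwards [hpos] with ω hω
    exact_mod_cast Nat.one_le_iff_ne_zero.2 hω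
  have hone : (fun _ => 1) =ᵐ[P] fun ω => (N ω : ℝ) :=
    (integral_eq_iff_of_ae_le (integrable_const 1) (.of_integral_ne_zero (by simp [hN1]))
      hone_le).1 (by simp [hN1])
  refine hN2 ((integral_congr_ae (g := fun _ => 1) ?_).trans (by simp))
  filter_upwards [hone] with ω hω
  simp [← hω]

theorem pgfRemainder_zero_pos (hN1 : ∫ ω, (N ω : ℝ) ∂P = 1) (hN0 : ∃ᶠ ω in ae P, N ω = 0) :
    0 < pgfRemainder P N 0 := by
  have hN : Integrable (fun ω => (N ω : ℝ)) P := .of_integral_ne_zero (by simp [hN1])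
  calc 0 < weightedPGF P (fun _ => 1) N 0 :=
        weightedPGF_zero_pos (aemeasurable_of_natCast hN.aemeasurable) (integrable_const 1)
          (ae_of_all _ fun _ => one_pos) hN0
    _ = pgfRemainder P N 0 := by
        simpa [hN1] using (one_sub_sq_mul_pgfRemainder hN (x := 0) (by simp)).symm

end SecondOrderExpansion

section Discounted

variable {t : ℝ}

theorem integrable_exp_neg_mul [IsFiniteMeasure P] (hD : AEMeasurable D P)
    (hD0 : ∀ᵐ ω ∂P, 0 ≤ D ω) (ht : 0 ≤ t) : Integrable (fun ω => Real.exp (-t * D ω)) P := by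
  refine .of_bound (by fun_prop) 1 ?_
  filter_upwards [hD0] with ω hω
  rw [Real.norm_eq_abs, Real.abs_exp, Real.exp_le_one_iff]
  nlinarith

theorem integral_exp_neg_mul_lt_one [IsProbabilityMeasure P] (hD0 : ∀ᵐ ω ∂P, 0 ≤ D ω)
    (hD1 : 0 < ∫ ω, D ω ∂P) (ht : 0 < t) : ∫ ω, Real.exp (-t * D ω) ∂P < 1 := by
  have hD : Integrable D P := .of_integral_ne_zero hD1.ne'
  have hint := integrable_exp_neg_mul hD.aemeasurable hD0 ht.le
  have hle : (fun ω => Real.exp (-t * D ω)) ≤ᵐ[P] fun _ => 1 := by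
    filter_upwards [hD0] with ω hω
    exact Real.exp_le_one_iff.2 (by nlinarith)
  refine lt_of_le_of_ne (by simpa using integral_mono_ae hint (integrable_const 1) hle) fun h => ?_
  have hexp := (integral_eq_iff_of_ae_le hint (integrable_const 1) hle).1 (by simpa using h)
  refine hD1.ne' (integral_eq_zero_of_ae ?_)
  filter_upwards [hexp] with ω hω
  simpa [ht.ne'] using hω

theorem tendsto_weightedPGF_one_sub_exp_div {xf : ℝ → ℝ} (hN : AEMeasurable N P)
    (hD : Integrable D P) (hD0 : ∀ᵐ ω ∂P, 0 ≤ D ω)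
    (hxf : ∀ᶠ t in 𝓝[>] 0, |xf t| ≤ 1) (hlim : Tendsto xf (𝓝[>] 0) (𝓝 1)) :
    Tendsto (fun t => weightedPGF P (fun ω => (1 - Real.exp (-t * D ω)) / t) N (xf t)) (𝓝[>] 0)
      (𝓝 (∫ ω, D ω ∂P)) := by
  rw [← weightedPGF_one_right (N := N)]
  refine tendsto_weightedPGF hN (.of_forall fun t => ?_) ?_ hD (ae_of_all _ fun ω => ?_) hxf hlim
  · have := hD.aemeasurable
    fun_prop
  · filter_upwards [eventually_mem_nhdsWithin] with t ht
    filter_upwards [hD0] with ω hω using abs_one_sub_exp_neg_mul_div_le ht hω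
  · exact (tendsto_one_sub_exp_neg_mul_div (D ω)).mono_left (nhdsGT_le_nhdsNE 0)

end Discounted

section Asymptotics

variable [IsProbabilityMeasure P] {xf : ℝ → ℝ}

theorem one_sub_sq_div_mul_pgfRemainder_of_isFixedPt {t : ℝ} (hN1 : ∫ ω, (N ω : ℝ) ∂P = 1)
    (hD : AEMeasurable D P) (hD0 : ∀ᵐ ω ∂P, 0 ≤ D ω) (ht : 0 ≤ t) (hx : |x| ≤ 1)
    (hfx : IsFixedPt (weightedPGF P (fun ω => Real.exp (-t * D ω)) N) x) :
    (1 - x) ^ 2 / t * pgfRemainder P N x =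
      weightedPGF P (fun ω => (1 - Real.exp (-t * D ω)) / t) N x := by
  rw [weightedPGF_div, ← one_sub_sq_mul_pgfRemainder_of_isFixedPt hN1
    (integrable_exp_neg_mul hD hD0 ht) hx hfx, div_mul_eq_mul_div]

theorem one_sub_sq_div_le_of_isFixedPt {t : ℝ} (hN : MemLp (fun ω => (N ω : ℝ)) 2 P)
    (hN1 : ∫ ω, (N ω : ℝ) ∂P = 1) (hN0 : ∃ᶠ ω in ae P, N ω = 0) (hD : Integrable D P)
    (hD0 : ∀ᵐ ω ∂P, 0 ≤ D ω) (ht : 0 < t) (hx : x ∈ Icc 0 1)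
    (hfx : IsFixedPt (weightedPGF P (fun ω => Real.exp (-t * D ω)) N) x) :
    (1 - x) ^ 2 / t ≤ (∫ ω, D ω ∂P) / pgfRemainder P N 0 := by
  have hx' := abs_le_one_of_mem_Icc hx
  rw [le_div_iff₀ (pgfRemainder_zero_pos hN1 hN0)]
  calc (1 - x) ^ 2 / t * pgfRemainder P N 0
      ≤ (1 - x) ^ 2 / t * pgfRemainder P N x := by
        gcongr
        exact monotoneOn_pgfRemainder hN (left_mem_Icc.2 zero_le_one) hx hx.1
    _ = weightedPGF P (fun ω => (1 - Real.exp (-t * D ω)) / t) N x :=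
        one_sub_sq_div_mul_pgfRemainder_of_isFixedPt hN1 hD.aemeasurable hD0 ht.le hx' hfx
    _ ≤ ∫ ω, D ω ∂P := (le_abs_self _).trans <| abs_weightedPGF_le hD
        (hD0.mono fun _ hω => abs_one_sub_exp_neg_mul_div_le ht hω) hx'

theorem tendsto_one_of_isFixedPt (hN : MemLp (fun ω => (N ω : ℝ)) 2 P)
    (hN1 : ∫ ω, (N ω : ℝ) ∂P = 1) (hN0 : ∃ᶠ ω in ae P, N ω = 0) (hD : Integrable D P)
    (hD0 : ∀ᵐ ω ∂P, 0 ≤ D ω)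
    (hxf : ∀ᶠ t in 𝓝[>] 0, xf t ∈ Icc 0 1 ∧
      IsFixedPt (weightedPGF P (fun ω => Real.exp (-t * D ω)) N) (xf t)) :
    Tendsto xf (𝓝[>] 0) (𝓝 1) := by
  set C := (∫ ω, D ω ∂P) / pgfRemainder P N 0
  have hsqrt : Tendsto (fun t : ℝ => √(C * t)) (𝓝[>] 0) (𝓝 0) := by
    have hcont : Continuous fun t : ℝ => √(C * t) := by fun_prop
    simpa using (hcont.tendsto 0).mono_left nhdsWithin_le_nhds
  have hsub : Tendsto (fun t => 1 - xf t) (𝓝[>] 0) (𝓝 0) := by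
    refine squeeze_zero' (hxf.mono fun t ht => sub_nonneg.2 ht.1.2) ?_ hsqrt
    filter_upwards [hxf, eventually_mem_nhdsWithin] with t ⟨hx, hfx⟩ ht
    refine Real.le_sqrt_of_sq_le ((div_le_iff₀ ht).1 ?_)
    exact one_sub_sq_div_le_of_isFixedPt hN hN1 hN0 hD hD0 ht hx hfx
  simpa using hsub.const_sub 1

theorem tendsto_one_sub_sq_div_of_isFixedPt (hN : MemLp (fun ω => (N ω : ℝ)) 2 P)
    (hN1 : ∫ ω, (N ω : ℝ) ∂P = 1) (hN0 : ∃ᶠ ω in ae P, N ω = 0) (hD : Integrable D P)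
    (hD0 : ∀ᵐ ω ∂P, 0 ≤ D ω)
    (hxf : ∀ᶠ t in 𝓝[>] 0, xf t ∈ Icc 0 1 ∧
      IsFixedPt (weightedPGF P (fun ω => Real.exp (-t * D ω)) N) (xf t)) :
    Tendsto (fun t => (1 - xf t) ^ 2 / t) (𝓝[>] 0)
      (𝓝 ((∫ ω, D ω ∂P) / pgfRemainder P N 1)) := by
  have hlim := tendsto_one_of_isFixedPt hN hN1 hN0 hD hD0 hxf
  have hpos : ∀ {x : ℝ}, x ∈ Icc 0 1 → 0 < pgfRemainder P N x := fun hx =>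
    (pgfRemainder_zero_pos hN1 hN0).trans_le
      (monotoneOn_pgfRemainder hN (left_mem_Icc.2 zero_le_one) hx hx.1)
  have hone : (1 : ℝ) ∈ Icc 0 1 := right_mem_Icc.2 zero_le_one
  have hden : Tendsto (fun t => pgfRemainder P N (xf t)) (𝓝[>] 0) (𝓝 (pgfRemainder P N 1)) :=
    (continuousOn_pgfRemainder hN 1 hone).tendsto.comp
      (tendsto_nhdsWithin_iff.2 ⟨hlim, hxf.mono fun _ h => h.1⟩)
  have hnum := tendsto_weightedPGF_one_sub_exp_div (aemeasurable_of_natCast hN.aemeasurable) hD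
    hD0 (hxf.mono fun _ h => abs_le_one_of_mem_Icc h.1) hlim
  refine (hnum.div hden (hpos hone).ne').congr' ?_
  filter_upwards [hxf, eventually_mem_nhdsWithin] with t ⟨hx, hfx⟩ ht
  rw [Pi.div_apply, ← one_sub_sq_div_mul_pgfRemainder_of_isFixedPt hN1 hD.aemeasurable hD0
    (le_of_lt ht) (abs_le_one_of_mem_Icc hx) hfx, mul_div_cancel_right₀ _ (hpos hx).ne']

theorem tendsto_one_sub_mul_sqrt_of_isFixedPt {σ2 : ℝ} (hσ : 0 < σ2)
    (hN1 : ∫ ω, (N ω : ℝ) ∂P = 1) (hN2 : ∫ ω, (N ω : ℝ) ^ 2 ∂P = 1 + σ2) (hD : Integrable D P)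
    (hD0 : ∀ᵐ ω ∂P, 0 ≤ D ω)
    (hxf : ∀ᶠ t in 𝓝[>] 0, xf t ∈ Icc 0 1 ∧
      IsFixedPt (weightedPGF P (fun ω => Real.exp (-t * D ω)) N) (xf t)) :
    Tendsto (fun t => (1 - xf t) * √(σ2 / (2 * t))) (𝓝[>] 0) (𝓝 √(∫ ω, D ω ∂P)) := by
  have hNint : Integrable (fun ω => (N ω : ℝ)) P := .of_integral_ne_zero (by simp [hN1])
  have hN : MemLp (fun ω => (N ω : ℝ)) 2 P := (memLp_two_iff_integrable_sq
    hNint.aestronglyMeasurable).2 (.of_integral_ne_zero (by rw [hN2]; positivity))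
  have hN0 := frequently_eq_zero_of_integral_eq_one hN1 (by linarith)
  have hlim := ((tendsto_one_sub_sq_div_of_isFixedPt hN hN1 hN0 hD hD0 hxf).mul_const
    (σ2 / 2)).sqrt
  have hrem : pgfRemainder P N 1 = σ2 / 2 := by rw [pgfRemainder_one hN, hN1, hN2]; ring
  rw [hrem, div_mul_cancel₀ _ (by positivity)] at hlim
  refine hlim.congr' ?_
  filter_upwards [hxf] with t ⟨hx, _⟩
  rw [div_mul_eq_mul_div, ← mul_div_assoc, div_div, mul_div_assoc, Real.sqrt_mul (sq_nonneg _),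
    Real.sqrt_sq (sub_nonneg.2 hx.2)]

end Asymptotics

end Probability

theorem fixed_point_asymptotics_general
    {Ω : Type*} [MeasurableSpace Ω] (P : Measure Ω) [IsProbabilityMeasure P]
    (N : Ω → ℕ) (D : Ω → ℝ) (σ2 : ℝ) (hσ : 0 < σ2)
    (hN1 : ∫ ω, (N ω : ℝ) ∂P = 1)
    (hN2 : ∫ ω, (N ω : ℝ) ^ 2 ∂P = 1 + σ2)
    (hD0 : ∀ᵐ ω ∂P, 0 ≤ D ω) (hD1 : 0 < ∫ ω, D ω ∂P) :
    (∀ t : ℝ, 0 < t →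
      ∃! x : ℝ, x ∈ Icc (0 : ℝ) 1 ∧ x = ∫ ω, Real.exp (-t * D ω) * x ^ N ω ∂P)
    ∧
    ∀ xf : ℝ → ℝ,
      (∀ t : ℝ, 0 < t → xf t ∈ Icc (0 : ℝ) 1 ∧
          xf t = ∫ ω, Real.exp (-t * D ω) * xf t ^ N ω ∂P) →
      (∀ t : ℝ, 0 < t → xf t ∈ Ioo (0 : ℝ) 1) ∧
      Tendsto (fun t : ℝ => (1 - xf t) * √(σ2 / (2 * t))) (𝓝[>] 0) (𝓝 √(∫ ω, D ω ∂P)) := by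
  have hD : Integrable D P := .of_integral_ne_zero hD1.ne'
  have hN : AEMeasurable N P := aemeasurable_of_natCast
    (Integrable.of_integral_ne_zero (by simp [hN1])).aemeasurable
  have hN0 := frequently_eq_zero_of_integral_eq_one hN1 (by linarith)
  have hW : ∀ t : ℝ, 0 < t → Integrable (fun ω => Real.exp (-t * D ω)) P := fun t ht =>
    integrable_exp_neg_mul hD.aemeasurable hD0 ht.le
  have hW1 : ∀ t : ℝ, 0 < t → ∫ ω, Real.exp (-t * D ω) ∂P < 1 := fun t ht =>
    integral_exp_neg_mul_lt_one hD0 hD1 ht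
  refine ⟨fun t ht => ?_, fun xf hxf => ⟨fun t ht => ?_, ?_⟩⟩
  · simpa only [IsFixedPt, weightedPGF, eq_comm] using existsUnique_isFixedPt_weightedPGF hN
      (hW t ht) (ae_of_all _ fun _ => Real.exp_nonneg _) (hW1 t ht)
  · exact mem_Ioo_of_isFixedPt (weightedPGF_zero_pos hN (hW t ht)
      (ae_of_all _ fun _ => Real.exp_pos _) hN0) (weightedPGF_one_right.trans_lt (hW1 t ht))
      (hxf t ht).1 (hxf t ht).2.symm
  · refine tendsto_one_sub_mul_sqrt_of_isFixedPt hσ hN1 hN2 hD hD0 ?_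
    filter_upwards [eventually_mem_nhdsWithin] with t ht using (hxf t ht).imp_right Eq.symm

/-- fixed point `h_t(∞)` and its asymptotics; part of Lemma 25 of the
paper.  Let `N` be `ℕ`-valued with `E[N] = 1`, `E[N²] = 1 + σ²`, `σ² ∈ (0,∞)`, and `D ≥ 0`
with `E[D] = 1`.  For every `t > 0` there is exactly one `x_t ∈ [0,1]` with
`x_t = E[e^{−tD}·x_t^N]`; it lies in `(0,1)`, and `(1 − x_t)·√(σ²/(2t)) → 1` as `t → 0⁺`. -/
theorem fixed_point_asymptotics
    {Ω : Type*} [MeasurableSpace Ω] (P : Measure Ω) [IsProbabilityMeasure P]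
    (N : Ω → ℕ) (D : Ω → ℝ) (hNm : Measurable N) (hDm : Measurable D)
    (σ2 : ℝ) (hσ : 0 < σ2)
    (hN1 : ∫ ω, (N ω : ℝ) ∂P = 1)
    (hN2 : ∫ ω, ((N ω : ℝ)) ^ 2 ∂P = 1 + σ2)
    (hD0 : ∀ᵐ ω ∂P, 0 ≤ D ω) (hD1 : ∫ ω, D ω ∂P = 1) :
    (∀ t : ℝ, 0 < t →
      ∃! x : ℝ, x ∈ Set.Icc (0 : ℝ) 1 ∧ x = ∫ ω, Real.exp (-t * D ω) * x ^ (N ω) ∂P)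
    ∧
    ∀ xf : ℝ → ℝ,
      (∀ t : ℝ, 0 < t → xf t ∈ Set.Icc (0 : ℝ) 1 ∧
          xf t = ∫ ω, Real.exp (-t * D ω) * (xf t) ^ (N ω) ∂P) →
      (∀ t : ℝ, 0 < t → xf t ∈ Set.Ioo (0 : ℝ) 1) ∧
      Tendsto (fun t : ℝ => (1 - xf t) * Real.sqrt (σ2 / (2 * t)))
        (nhdsWithin 0 (Set.Ioi 0)) (nhds 1) := by
  simpa [hD1] using
    fixed_point_asymptotics_general P N D σ2 hσ hN1 hN2 hD0 (hD1.symm ▸ one_pos)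
end

section
/- Let a ∈ ℝ and let y : (a,∞) → ℝ be twice differentiable with y(t) > 0 and y''(t) = y(t)² + y(t) for all t ∈ (a,∞), and suppose y is bounded. Then y(t) → 0 and y'(t) → 0 as t → ∞, and y'(t) = −√((2/3)·y(t)³ + y(t)²) for every t ∈ (a,∞). -/
open Filter

/-! A bounded convex function on a half-line decreases to a limit `L`, and its derivative, squeezed
between unit difference quotients, tends to `0`. For a solution of `y'' = g(y)` the second
derivative then converges to `g(L)`, which must vanish because `y'` converges; for `g(x) = x² + x`
and `L ≥ 0` this leaves `L = 0`. The energy `y'² / 2 - G(y)`, with `G' = g`, is constant, so it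
equals its limit `-G(L)`, and `y' ≤ 0` selects the sign of the square root. -/

open Set Topology

theorem antitoneOn_of_convexOn_of_bddAbove {𝕜 : Type*} [Field 𝕜] [LinearOrder 𝕜]
    [IsStrictOrderedRing 𝕜] {s : Set 𝕜} {f : 𝕜 → 𝕜} (hf : ConvexOn 𝕜 s f) (hs : IsUpperSet s)
    (hbdd : BddAbove (f '' s)) : AntitoneOn f s := by
  intro x hx z hz hxz
  by_contra! hlt
  have hxz : x < z := hxz.lt_of_ne (by rintro rfl; exact hlt.false)
  obtain ⟨C, hC⟩ := hbdd
  have hCz : f z ≤ C := hC (mem_image_of_mem f hz)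
  set m := (f z - f x) / (z - x)
  have hm : 0 < m := div_pos (sub_pos.2 hlt) (sub_pos.2 hxz)
  -- The secant line through `x` and `z` has reached the value `C + 1` at `w`.
  set w := z + (C + 1 - f z) / m
  have hzw : z < w := lt_add_of_pos_right z (div_pos (by linarith) hm)
  have hw : w ∈ s := hs hzw.le hz
  have hslope : m ≤ (f w - f z) / (w - z) := hf.slope_mono_adjacent hx hw hxz hzw
  have hfw : C + 1 - f z ≤ f w - f z := by
    rwa [le_div_iff₀ (sub_pos.2 hzw), add_sub_cancel_left, mul_div_cancel₀ _ hm.ne'] at hslope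
  linarith [hC (mem_image_of_mem f hw)]

theorem tendsto_atTop_csInf_of_antitoneOn {α β : Type*} [Preorder α]
    [ConditionallyCompleteLinearOrder β] [TopologicalSpace β] [OrderTopology β] {s : Set α}
    {f : α → β} (hf : AntitoneOn f s) (hs : IsUpperSet s) (hne : s.Nonempty)
    (hbdd : BddBelow (f '' s)) : Tendsto f atTop (𝓝 (sInf (f '' s))) := by
  refine tendsto_order.2 ⟨fun b hb ↦ ?_, fun b hb ↦ ?_⟩
  · obtain ⟨c, hc⟩ := hne
    filter_upwards [eventually_ge_atTop c] with t hct
    exact hb.trans_le (csInf_le hbdd (mem_image_of_mem f (hs hct hc)))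
  · obtain ⟨_, ⟨c, hc, rfl⟩, hcb⟩ := exists_lt_of_csInf_lt (hne.image f) hb
    filter_upwards [eventually_ge_atTop c] with t hct
    exact (hf hc (hs hct hc) hct).trans_lt hcb

theorem tendsto_add_const_sub_atTop {α E : Type*} [AddCommGroup α] [PartialOrder α]
    [IsOrderedAddMonoid α] [AddGroup E] [TopologicalSpace E] [IsTopologicalAddGroup E]
    {f : α → E} {b : E} (hf : Tendsto f atTop (𝓝 b)) (c : α) :
    Tendsto (fun t ↦ f (t + c) - f t) atTop (𝓝 0) := by
  simpa using (hf.comp (tendsto_atTop_add_const_right _ c tendsto_id)).sub hf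

theorem tendsto_deriv_atTop_zero_of_convexOn {s : Set ℝ} {f f' : ℝ → ℝ} {b : ℝ}
    (hconv : ConvexOn ℝ s f) (hs : s ∈ atTop) (hderiv : ∀ᶠ t in atTop, HasDerivAt f (f' t) t)
    (hf : Tendsto f atTop (𝓝 b)) : Tendsto f' atTop (𝓝 0) := by
  have hleft : Tendsto (fun t ↦ f t - f (t + -1)) atTop (𝓝 0) := by
    simpa using (tendsto_add_const_sub_atTop hf (-1)).neg
  have hshift (c : ℝ) : ∀ᶠ t in atTop, t + c ∈ s :=
    (tendsto_atTop_add_const_right _ c tendsto_id).eventually hs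
  refine tendsto_of_tendsto_of_tendsto_of_le_of_le' hleft (tendsto_add_const_sub_atTop hf 1) ?_ ?_
  · filter_upwards [hs, hshift (-1), hderiv] with t ht ht' hft
    simpa [slope_def_field] using hconv.slope_le_of_hasDerivAt ht' ht (by linarith) hft
  · filter_upwards [hs, hshift 1, hderiv] with t ht ht' hft
    simpa [slope_def_field] using hconv.le_slope_of_hasDerivAt ht ht' (lt_add_one t) hft

theorem limit_deriv_eq_zero_of_tendsto_atTop {E : Type*} [NormedAddCommGroup E]
    [NormedSpace ℝ E] {f f' : ℝ → E} {b m : E} (hderiv : ∀ᶠ t in atTop, HasDerivAt f (f' t) t)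
    (hf : Tendsto f atTop (𝓝 b)) (hf' : Tendsto f' atTop (𝓝 m)) : m = 0 := by
  suffices hm : Tendsto (fun t ↦ f (t + 1) - f t) atTop (𝓝 m) from
    tendsto_nhds_unique hm (tendsto_add_const_sub_atTop hf 1)
  refine Metric.nhds_basis_closedBall.tendsto_right_iff.2 fun ε hε ↦ ?_
  obtain ⟨T, hT⟩ := eventually_atTop.1
    (hderiv.and (hf'.eventually (Metric.closedBall_mem_nhds m hε)))
  filter_upwards [eventually_ge_atTop T] with t ht
  -- The mean value inequality for `u ↦ f u - u • m`, whose derivative is at most `ε` in norm.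
  have hmvt := (convex_Ici T).norm_image_sub_le_of_norm_hasDerivWithin_le
    (fun u hu ↦ ((hT u hu).1.sub ((hasDerivAt_id u).smul_const m)).hasDerivWithinAt)
    (fun u hu ↦ by simpa [dist_eq_norm] using (hT u hu).2) ht
    (show T ≤ t + 1 from ht.trans (lt_add_one t).le)
  simpa [dist_eq_norm, add_smul, sub_sub_sub_comm] using hmvt

/-- Newton's equation `y'' = g(y)` for a particle of unit mass on a line, on the time set `s`,
written as a first-order system: `v` is the velocity of the position `y`, and `g` is the force. -/
def IsNewtonMotionOn (g : ℝ → ℝ) (s : Set ℝ) (y v : ℝ → ℝ) : Prop :=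
  ∀ t ∈ s, HasDerivAt y (v t) t ∧ HasDerivAt v (g (y t)) t

namespace IsNewtonMotionOn

variable {g G y v : ℝ → ℝ} {s : Set ℝ} {L w : ℝ}

theorem convexOn (h : IsNewtonMotionOn g s y v) (hs : Convex ℝ s)
    (hg : ∀ t ∈ s, 0 ≤ g (y t)) : ConvexOn ℝ s y :=
  convexOn_of_hasDerivWithinAt2_nonneg hs
    (fun t ht ↦ (h t ht).1.continuousAt.continuousWithinAt)
    (fun t ht ↦ (h t (interior_subset ht)).1.hasDerivWithinAt)
    (fun t ht ↦ (h t (interior_subset ht)).2.hasDerivWithinAt)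
    (fun t ht ↦ hg t (interior_subset ht))

theorem eventually_hasDerivAt (h : IsNewtonMotionOn g s y v) (hs : s ∈ atTop) :
    ∀ᶠ t in atTop, HasDerivAt y (v t) t ∧ HasDerivAt v (g (y t)) t :=
  mem_of_superset hs h

theorem force_eq_zero_of_tendsto (h : IsNewtonMotionOn g s y v) (hs : s ∈ atTop)
    (hy : Tendsto y atTop (𝓝 L)) (hv : Tendsto v atTop (𝓝 w)) (hg : ContinuousAt g L) :
    g L = 0 :=
  limit_deriv_eq_zero_of_tendsto_atTop ((h.eventually_hasDerivAt hs).mono fun _ ht ↦ ht.2) hv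
    (hg.tendsto.comp hy)

theorem energy_eq (h : IsNewtonMotionOn g s y v) (hs : IsOpen s) (hs' : IsPreconnected s)
    (hG : ∀ t ∈ s, HasDerivAt G (g (y t)) (y t)) {t u : ℝ} (ht : t ∈ s) (hu : u ∈ s) :
    v t ^ 2 / 2 - G (y t) = v u ^ 2 / 2 - G (y u) := by
  have henergy (r : ℝ) (hr : r ∈ s) : HasDerivAt (fun r ↦ v r ^ 2 / 2 - G (y r)) 0 r := by
    refine ((((h r hr).2.pow 2).div_const 2).sub ((hG r hr).comp r (h r hr).1)).congr_deriv ?_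
    push_cast
    ring
  exact hs.is_const_of_deriv_eq_zero hs'
    (fun r hr ↦ (henergy r hr).differentiableAt.differentiableWithinAt)
    (fun r hr ↦ (henergy r hr).deriv) ht hu

theorem sq_velocity_eq (h : IsNewtonMotionOn g s y v) (hs : IsOpen s) (hs' : IsPreconnected s)
    (hs_top : s ∈ atTop) (hG : ∀ t ∈ s, HasDerivAt G (g (y t)) (y t)) (hGL : ContinuousAt G L)
    (hy : Tendsto y atTop (𝓝 L)) (hv : Tendsto v atTop (𝓝 0)) {t : ℝ} (ht : t ∈ s) :
    v t ^ 2 = 2 * (G (y t) - G L) := by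
  have hlim : Tendsto (fun u ↦ v u ^ 2 / 2 - G (y u)) atTop (𝓝 (-G L)) := by
    simpa using ((hv.pow 2).div_const 2).sub (hGL.tendsto.comp hy)
  have hconst : Tendsto (fun u ↦ v u ^ 2 / 2 - G (y u)) atTop (𝓝 (v t ^ 2 / 2 - G (y t))) :=
    tendsto_const_nhds.congr' (mem_of_superset hs_top fun _ hu ↦ h.energy_eq hs hs' hG ht hu)
  linarith [tendsto_nhds_unique hconst hlim]

theorem velocity_nonpos (h : IsNewtonMotionOn g s y v) (hs : IsOpen s) (hanti : AntitoneOn y s)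
    {t : ℝ} (ht : t ∈ s) : v t ≤ 0 := by
  rw [← (h t ht).1.deriv, ← derivWithin_of_isOpen hs ht]
  exact hanti.derivWithin_nonpos

theorem velocity_eq_neg_sqrt (h : IsNewtonMotionOn g s y v) (hs : IsOpen s)
    (hs' : IsPreconnected s) (hs_top : s ∈ atTop) (hanti : AntitoneOn y s)
    (hG : ∀ t ∈ s, HasDerivAt G (g (y t)) (y t)) (hGL : ContinuousAt G L)
    (hy : Tendsto y atTop (𝓝 L)) (hv : Tendsto v atTop (𝓝 0)) {t : ℝ} (ht : t ∈ s) :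
    v t = -√(2 * (G (y t) - G L)) := by
  rw [← h.sq_velocity_eq hs hs' hs_top hG hGL hy hv ht, Real.sqrt_sq_eq_abs,
    abs_of_nonpos (h.velocity_nonpos hs hanti ht), neg_neg]

end IsNewtonMotionOn

theorem hasDerivAt_cube_div_three_add_sq_div_two (x : ℝ) :
    HasDerivAt (fun x : ℝ ↦ x ^ 3 / 3 + x ^ 2 / 2) (x ^ 2 + x) x := by
  refine (((hasDerivAt_pow 3 x).div_const 3).add
    ((hasDerivAt_pow 2 x).div_const 2)).congr_deriv ?_
  push_cast
  ring

/-- Appendix B of the paper, first part: study of the ODE `y'' = y² + y`.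
Let `y : (a,∞) → ℝ` be twice differentiable, positive, bounded, with `y'' = y² + y`.  Then
`y(t) → 0` and `y'(t) → 0` as `t → ∞`, and `y' = −√((2/3)·y³ + y²)` on `(a,∞)`. -/
theorem ode_bounded_solution
    (a : ℝ) (y y' : ℝ → ℝ)
    (hderiv : ∀ t ∈ Set.Ioi a, HasDerivAt y (y' t) t ∧ HasDerivAt y' (y t ^ 2 + y t) t)
    (hpos : ∀ t ∈ Set.Ioi a, 0 < y t)
    (hbdd : ∃ C : ℝ, ∀ t ∈ Set.Ioi a, y t ≤ C) :
    Tendsto y atTop (nhds 0) ∧ Tendsto y' atTop (nhds 0) ∧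
      ∀ t ∈ Set.Ioi a, y' t = -Real.sqrt (2 / 3 * y t ^ 3 + y t ^ 2) := by
  have hmotion : IsNewtonMotionOn (fun x ↦ x ^ 2 + x) (Ioi a) y y' := hderiv
  have hconv : ConvexOn ℝ (Ioi a) y := hmotion.convexOn (convex_Ioi a) fun t ht ↦
    add_nonneg (sq_nonneg _) (hpos t ht).le
  have hanti : AntitoneOn y (Ioi a) := antitoneOn_of_convexOn_of_bddAbove hconv
    (isUpperSet_Ioi a) (hbdd.imp fun _ hC ↦ forall_mem_image.2 hC)
  obtain ⟨L, hy⟩ : ∃ L, Tendsto y atTop (𝓝 L) := ⟨_, tendsto_atTop_csInf_of_antitoneOn hanti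
    (isUpperSet_Ioi a) nonempty_Ioi ⟨0, forall_mem_image.2 fun t ht ↦ (hpos t ht).le⟩⟩
  have htop : Ioi a ∈ atTop := Ioi_mem_atTop a
  have hy' : Tendsto y' atTop (𝓝 0) := tendsto_deriv_atTop_zero_of_convexOn hconv htop
    ((hmotion.eventually_hasDerivAt htop).mono fun _ ht ↦ ht.1) hy
  have hL : 0 ≤ L := ge_of_tendsto hy (mem_of_superset htop fun t ht ↦ (hpos t ht).le)
  have hequil : L ^ 2 + L = 0 := hmotion.force_eq_zero_of_tendsto htop hy hy' (by fun_prop)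
  obtain rfl : L = 0 := by nlinarith
  refine ⟨hy, hy', fun t ht ↦ ?_⟩
  rw [hmotion.velocity_eq_neg_sqrt isOpen_Ioi isPreconnected_Ioi htop hanti
    (fun t _ ↦ hasDerivAt_cube_div_three_add_sq_div_two (y t)) (by fun_prop) hy hy' ht]
  ring_nf
end

section
/- Fix an integer n ≥ 1 and let (b₀, b₁, …, b_{2n+2}) be uniformly distributed on the (nonempty, finite) set of integer sequences satisfying b₀ = 0, b₁ = −1, b_{2n+2} = 0 and |b_{k+1} − b_k| = 1 for every 0 ≤ k ≤ 2n+1. Let 𝒟 = {k : 1 ≤ k ≤ 2n+1 and b_{k+1} = b_k − 1} be the set of nonzero downstep indices. Then E[Σ_{k∈𝒟} b_k] = 0 and E[Σ_{k∈𝒟} b_k²] = n(n+1)/3. -/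
open MeasureTheory Filter

/-- An integer sequence is a `±1`-step bridge of length `2n+2` with `b₀ = 0`, `b₁ = −1`,
`b_{2n+2} = 0` (the value is pinned to `0` after time `2n+2`, so that there are only finitely
many such bridges). -/
def IsBridge (n : ℕ) (f : ℕ → ℤ) : Prop :=
  f 0 = 0 ∧ f 1 = -1 ∧ f (2 * n + 2) = 0 ∧
  (∀ k < 2 * n + 2, |f (k + 1) - f k| = 1) ∧
  ∀ k, 2 * n + 2 < k → f k = 0

/-!
Since `b` runs from `b_1 = -1` to `b_{2n+2} = 0` with steps `±1`, telescoping `b_k ^ 2` and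
`b_k ^ 3 - b_k` turns the two downstep sums into `(∑ b_k + n + 1) / 2` and
`(∑ b_k (b_k + 1)) / 2`, taken over all times `1 ≤ k ≤ N = 2n + 1`. The `N` steps after the first
are exchangeable signs with total `1`, so each has mean `1 / N` and two different ones have mean
product `-1 / N`. Now `b_k + 1` is the sum of the signs before time `k`, while `-b_k` is the sum of
the remaining ones; these are disjoint sets of `k - 1` and `N + 1 - k` signs, so
`E[b_k] = -(N + 1 - k) / N` and `E[b_k (b_k + 1)] = (k - 1)(N + 1 - k) / N`. Summing over `k` gives
`-(n + 1)` and `2n(n + 1) / 3`.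
-/

section Uniform

open Finset
open scoped BigOperators

lemma integral_comp_eq_expect_of_uniform {Ω E : Type*} [MeasurableSpace Ω] [MeasurableSpace E]
    [MeasurableSingletonClass E] {P : Measure Ω} [IsProbabilityMeasure P] {X : Ω → E}
    (hX : Measurable X) {S : Finset E} (hS : ∀ᵐ ω ∂P, X ω ∈ S)
    (hunif : ∀ x ∈ S, ∀ y ∈ S, P {ω | X ω = x} = P {ω | X ω = y}) (G : E → ℝ) :
    ∫ ω, G (X ω) ∂P = 𝔼 x ∈ S, G x := by
  have : IsProbabilityMeasure (P.map X) := Measure.isProbabilityMeasure_map hX.aemeasurable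
  have hmem : ∀ᵐ x ∂P.map X, x ∈ (S : Set E) :=
    (ae_map_iff hX.aemeasurable S.measurableSet).2 hS
  have hrestrict : (P.map X).restrict S = P.map X := Measure.restrict_eq_self_of_ae_mem hmem
  have hG : IntegrableOn G S (P.map X) := IntegrableOn.finset
  obtain ⟨ω₀, hω₀⟩ := hS.exists
  have hatom : ∀ x ∈ S, (P.map X).real {x} = (P.map X).real {X ω₀} := fun x hx ↦ by
    simp only [measureReal_def, Measure.map_apply hX (measurableSet_singleton _)]
    exact congrArg ENNReal.toReal (hunif x hx _ hω₀)
  have hcard : (#S : ℝ) * (P.map X).real {X ω₀} = 1 := by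
    rw [← nsmul_eq_mul, ← sum_const, ← sum_congr rfl hatom,
      sum_measureReal_singleton, measureReal_def,
      (mem_ae_iff_prob_eq_one S.measurableSet).1 hmem, ENNReal.toReal_one]
  calc ∫ ω, G (X ω) ∂P = ∫ x in S, G x ∂P.map X := by
        rw [hrestrict, integral_map hX.aemeasurable (hrestrict ▸ hG.aestronglyMeasurable)]
    _ = ∑ x ∈ S, (P.map X).real {X ω₀} * G x := by
        rw [setIntegral_finset S hG]
        exact sum_congr rfl fun x hx ↦ by rw [hatom x hx, smul_eq_mul]
    _ = 𝔼 x ∈ S, G x := by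
        rw [← mul_sum, expect_eq_sum_div_card, eq_div_iff_mul_eq, mul_right_comm,
          mul_comm _ (#S : ℝ), hcard, one_mul]
        exact left_ne_zero_of_mul_eq_one hcard

end Uniform

section SignVectors

open Finset
open scoped BigOperators

variable {ι : Type*} [Fintype ι] [DecidableEq ι] {s : ℤ}

/-- The finite set of `±1`-valued vectors indexed by `ι` whose entries add up to `s`. -/
def signVectors (ι : Type*) [Fintype ι] [DecidableEq ι] (s : ℤ) : Finset (ι → ℤ) :=
  {ε ∈ Fintype.piFinset fun _ ↦ {1, -1} | ∑ i, ε i = s}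

lemma mem_signVectors {ε : ι → ℤ} :
    ε ∈ signVectors ι s ↔ (∀ i, ε i = 1 ∨ ε i = -1) ∧ ∑ i, ε i = s := by
  simp [signVectors]

lemma comp_perm_mem_signVectors (σ : Equiv.Perm ι) {ε : ι → ℤ} :
    ε ∘ σ ∈ signVectors ι s ↔ ε ∈ signVectors ι s := by
  simp only [mem_signVectors, Function.comp_apply, Equiv.sum_comp σ ε]
  rw [σ.forall_congr_left]
  simp

lemma expect_signVectors_comp_perm {M : Type*} [AddCommMonoid M] [Module ℚ≥0 M]
    (σ : Equiv.Perm ι) (G : (ι → ℤ) → M) :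
    𝔼 ε ∈ signVectors ι s, G (ε ∘ σ) = 𝔼 ε ∈ signVectors ι s, G ε :=
  expect_equiv (σ.symm.arrowCongr (Equiv.refl ℤ))
    (fun _ ↦ (comp_perm_mem_signVectors σ).symm) fun _ _ ↦ rfl

lemma card_mul_expect_sign (hs : (signVectors ι s).Nonempty) (i : ι) :
    (Fintype.card ι : ℝ) * 𝔼 ε ∈ signVectors ι s, (ε i : ℝ) = s := by
  have hexch (j : ι) : 𝔼 ε ∈ signVectors ι s, (ε i : ℝ) = 𝔼 ε ∈ signVectors ι s, (ε j : ℝ) := by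
    simpa using expect_signVectors_comp_perm (Equiv.swap i j) fun ε ↦ (ε j : ℝ)
  calc (Fintype.card ι : ℝ) * 𝔼 ε ∈ signVectors ι s, (ε i : ℝ)
      = ∑ j, 𝔼 ε ∈ signVectors ι s, (ε j : ℝ) := by
        rw [← sum_congr rfl fun j _ ↦ hexch j, sum_const, nsmul_eq_mul,
          card_univ]
    _ = 𝔼 _ε ∈ signVectors ι s, (s : ℝ) := by
        rw [← expect_sum_comm]
        exact expect_congr rfl fun _ hε ↦ mod_cast (mem_signVectors.1 hε).2
    _ = s := expect_const hs _

lemma card_mul_expect_sign_mul_sign (hs : (signVectors ι s).Nonempty) {i j : ι} (hij : i ≠ j) :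
    (Fintype.card ι : ℝ) * (Fintype.card ι - 1) * 𝔼 ε ∈ signVectors ι s, (ε i * ε j : ℝ) =
      s ^ 2 - Fintype.card ι := by
  have hexch : ∀ k ∈ univ.erase i, 𝔼 ε ∈ signVectors ι s, (ε i * ε k : ℝ) =
      𝔼 ε ∈ signVectors ι s, (ε i * ε j : ℝ) := fun k hk ↦ by
    simpa [Equiv.swap_apply_of_ne_of_ne hij (ne_of_mem_erase hk).symm] using
      expect_signVectors_comp_perm (Equiv.swap j k) fun ε ↦ (ε i * ε j : ℝ)
  have hcard : ((univ.erase i).card : ℝ) = Fintype.card ι - 1 := by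
    rw [cast_card_erase_of_mem (mem_univ i), card_univ]
  have hrow : ∀ ε ∈ signVectors ι s,
      ∑ k ∈ univ.erase i, (ε i * ε k : ℝ) = s * ε i - 1 := fun ε hε ↦ by
    obtain ⟨hsign, hsum⟩ := mem_signVectors.1 hε
    have hsq : (ε i * ε i : ℝ) = 1 := by rcases hsign i with h | h <;> simp [h]
    rw [sum_erase_eq_sub (mem_univ i), ← mul_sum, ← Int.cast_sum, hsum, hsq,
      mul_comm]
  have hpair : (Fintype.card ι - 1 : ℝ) * 𝔼 ε ∈ signVectors ι s, (ε i * ε j : ℝ) =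
      s * 𝔼 ε ∈ signVectors ι s, (ε i : ℝ) - 1 := by
    rw [← hcard, ← nsmul_eq_mul, ← sum_const, ← sum_congr rfl hexch,
      ← expect_sum_comm, expect_congr rfl hrow, expect_sub_distrib,
      expect_const hs, mul_expect]
  linear_combination (Fintype.card ι : ℝ) * hpair + s * card_mul_expect_sign hs i

lemma card_mul_expect_sum_sign (hs : (signVectors ι s).Nonempty) (A : Finset ι) :
    (Fintype.card ι : ℝ) * 𝔼 ε ∈ signVectors ι s, ∑ i ∈ A, (ε i : ℝ) = #A * s := by
  rw [expect_sum_comm, mul_sum,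
    sum_congr rfl fun i _ ↦ card_mul_expect_sign hs i, sum_const, nsmul_eq_mul]

lemma card_mul_expect_sum_sign_mul_sum_sign (hs : (signVectors ι s).Nonempty) {A B : Finset ι}
    (hAB : Disjoint A B) :
    (Fintype.card ι : ℝ) * (Fintype.card ι - 1) *
        𝔼 ε ∈ signVectors ι s, (∑ i ∈ A, (ε i : ℝ)) * ∑ j ∈ B, (ε j : ℝ) =
      #A * #B * (s ^ 2 - Fintype.card ι) := by
  simp only [sum_mul_sum, expect_sum_comm]
  simp only [mul_sum]
  rw [sum_congr rfl fun i hi ↦ sum_congr rfl fun j hj ↦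
    card_mul_expect_sign_mul_sign hs (disjoint_iff_ne.1 hAB i hi j hj)]
  simp only [sum_const, nsmul_eq_mul, mul_assoc]

end SignVectors

section Downsteps

open Finset

variable {x : ℕ → ℤ} {a c : ℕ}

lemma four_mul_sum_downsteps (hac : a ≤ c) (hx : ∀ k ∈ Icc a c, |x (k + 1) - x k| = 1) :
    4 * ∑ k ∈ Icc a c with x (k + 1) = x k - 1, x k =
      2 * ∑ k ∈ Icc a c, x k + #(Icc a c) - (x (c + 1) ^ 2 - x a ^ 2) := by
  rw [← sum_Icc_sub hac fun k ↦ x k ^ 2, card_eq_sum_ones, sum_filter, mul_sum, mul_sum]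
  push_cast
  rw [← sum_add_distrib, ← sum_sub_distrib]
  refine sum_congr rfl fun k hk ↦ ?_
  rcases (abs_eq zero_le_one).1 (hx k hk) with h | h
  · rw [if_neg (by omega), eq_add_of_sub_eq' h]; ring
  · rw [if_pos (by omega), eq_add_of_sub_eq' h]; ring

lemma six_mul_sum_sq_downsteps (hac : a ≤ c) (hx : ∀ k ∈ Icc a c, |x (k + 1) - x k| = 1) :
    6 * ∑ k ∈ Icc a c with x (k + 1) = x k - 1, x k ^ 2 =
      3 * ∑ k ∈ Icc a c, x k * (x k + 1) - ((x (c + 1) ^ 3 - x (c + 1)) - (x a ^ 3 - x a)) := by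
  rw [← sum_Icc_sub hac fun k ↦ x k ^ 3 - x k, sum_filter, mul_sum, mul_sum, ← sum_sub_distrib]
  refine sum_congr rfl fun k hk ↦ ?_
  rcases (abs_eq zero_le_one).1 (hx k hk) with h | h
  · rw [if_neg (by omega), eq_add_of_sub_eq' h]; ring
  · rw [if_pos (by omega), eq_add_of_sub_eq' h]; ring

end Downsteps

section SignBridge

open Finset
open scoped BigOperators

variable {N : ℕ}

/-- The bridge whose first step is `-1` and whose later steps are the entries of `ε`: the step
from time `k ≥ 1` to time `k + 1` is `ε (k - 1)`. After the last step it stays constant, at `0` when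
the entries of `ε` add up to `1`, which is the convention of `IsBridge`. -/
def signBridge (ε : Fin N → ℤ) (k : ℕ) : ℤ :=
  if k = 0 then 0 else (∑ i with i.val + 1 < k, ε i) - 1

lemma signBridge_add_one (ε : Fin N → ℤ) {k : ℕ} (hk : k ≠ 0) :
    signBridge ε k + 1 = ∑ i with i.val + 1 < k, ε i := by
  simp [signBridge, hk]

lemma signBridge_eq_neg_sum {ε : Fin N → ℤ} (hε : ε ∈ signVectors (Fin N) 1) {k : ℕ}
    (hk : k ≠ 0) : signBridge ε k = -∑ i with ¬i.val + 1 < k, ε i := by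
  have hsum := sum_filter_add_sum_filter_not univ (fun i : Fin N ↦ i.val + 1 < k) ε
  rw [(mem_signVectors.1 hε).2] at hsum
  linarith [signBridge_add_one ε hk]

lemma signBridge_succ_sub (ε : Fin N → ℤ) (i : Fin N) :
    signBridge ε (i + 2) - signBridge ε (i + 1) = ε i := by
  have hinsert : univ.filter (fun j : Fin N ↦ j.val + 1 < i + 2) =
      insert i (univ.filter fun j : Fin N ↦ j.val + 1 < i + 1) := by
    ext j
    simp only [mem_filter, mem_univ, true_and, mem_insert, Fin.ext_iff]
    omega
  simp only [signBridge, Nat.add_eq_zero_iff, OfNat.ofNat_ne_zero, one_ne_zero, and_false,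
    if_false]
  rw [hinsert, sum_insert (by simp)]
  ring

lemma signBridge_injective : Function.Injective (signBridge (N := N)) := fun ε δ h ↦ by
  ext i
  rw [← signBridge_succ_sub ε i, h, signBridge_succ_sub]

lemma isBridge_signBridge {n : ℕ} {ε : Fin (2 * n + 1) → ℤ}
    (hε : ε ∈ signVectors (Fin (2 * n + 1)) 1) : IsBridge n (signBridge ε) := by
  have hend (k : ℕ) (hk : 2 * n + 2 ≤ k) : signBridge ε k = 0 := by
    rw [signBridge_eq_neg_sum hε (by omega), filter_false_of_mem fun i _ ↦ not_not.2 (by omega),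
      sum_empty, neg_zero]
  refine ⟨rfl, by simp [signBridge], hend _ le_rfl, fun k hk ↦ ?_, fun k hk ↦ hend k hk.le⟩
  rcases k with _ | k
  · simp [signBridge]
  · rw [signBridge_succ_sub ε ⟨k, by omega⟩, abs_eq zero_le_one]
    exact (mem_signVectors.1 hε).1 _

lemma IsBridge.ext {n : ℕ} {f g : ℕ → ℤ} (hf : IsBridge n f) (hg : IsBridge n g)
    (hstep : ∀ k < 2 * n + 1, f (k + 2) - f (k + 1) = g (k + 2) - g (k + 1)) : f = g := by
  obtain ⟨hf0, hf1, -, -, hftail⟩ := hf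
  obtain ⟨hg0, hg1, -, -, hgtail⟩ := hg
  funext k
  induction k with
  | zero => rw [hf0, hg0]
  | succ k ih =>
    rcases k with _ | k
    · rw [hf1, hg1]
    · rcases lt_or_ge k (2 * n + 1) with hk | hk
      · exact (sub_left_inj.1 (ih ▸ hstep k hk :))
      · rw [hftail _ (by omega), hgtail _ (by omega)]

lemma IsBridge.exists_signBridge_eq {n : ℕ} {f : ℕ → ℤ} (hf : IsBridge n f) :
    ∃ ε ∈ signVectors (Fin (2 * n + 1)) 1, signBridge ε = f := by
  obtain ⟨-, h1, hlast, hstep, -⟩ := id hf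
  have hmem : (fun i : Fin (2 * n + 1) ↦ f (i + 2) - f (i + 1)) ∈ signVectors _ 1 := by
    refine mem_signVectors.2 ⟨fun i ↦ (abs_eq zero_le_one).1 (hstep _ (by omega)), ?_⟩
    rw [Fin.sum_univ_eq_sum_range (fun i ↦ f (i + 2) - f (i + 1)),
      sum_range_sub (fun i ↦ f (i + 1)), hlast, zero_add, h1]
    rfl
  exact ⟨_, hmem, (isBridge_signBridge hmem).ext hf fun k hk ↦ signBridge_succ_sub _ ⟨k, hk⟩⟩

/-- The finite set of all bridges of length `2n+2`, given as the image of the sign vectors of total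
`1` so that expectations over it become expectations over exchangeable signs. -/
def bridges (n : ℕ) : Finset (ℕ → ℤ) :=
  (signVectors (Fin (2 * n + 1)) 1).map ⟨signBridge, signBridge_injective⟩

lemma mem_bridges {n : ℕ} {f : ℕ → ℤ} : f ∈ bridges n ↔ IsBridge n f := by
  refine Finset.mem_map.trans ⟨?_, IsBridge.exists_signBridge_eq⟩
  rintro ⟨ε, hε, rfl⟩
  exact isBridge_signBridge hε

lemma expect_bridges (n : ℕ) (G : (ℕ → ℤ) → ℝ) :
    𝔼 f ∈ bridges n, G f = 𝔼 ε ∈ signVectors (Fin (2 * n + 1)) 1, G (signBridge ε) := by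
  rw [bridges, expect_eq_sum_div_card, sum_map, card_map, expect_eq_sum_div_card]
  rfl

end SignBridge

section Moments

open Finset
open scoped BigOperators

lemma card_filter_succ_lt {N k : ℕ} (hk : k ∈ Icc 1 N) :
    (#{i : Fin N | i.val + 1 < k} : ℝ) = k - 1 := by
  obtain ⟨hk1, hkN⟩ := mem_Icc.1 hk
  rw [filter_congr fun i _ ↦ Nat.lt_sub_iff_add_lt.symm, Fin.card_filter_val_lt,
    min_eq_right (by omega), Nat.cast_pred hk1]

lemma card_filter_not_succ_lt {N k : ℕ} (hk : k ∈ Icc 1 N) :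
    (#{i : Fin N | ¬i.val + 1 < k} : ℝ) = N + 1 - k := by
  have hcard : (#{i : Fin N | i.val + 1 < k} + #{i : Fin N | ¬i.val + 1 < k} : ℝ) = N := by
    exact_mod_cast (card_filter_add_card_filter_not _).trans (card_fin N)
  linarith [card_filter_succ_lt hk]

variable {N : ℕ}

lemma expect_signBridge (hne : (signVectors (Fin N) 1).Nonempty) {k : ℕ} (hk : k ∈ Icc 1 N) :
    N * 𝔼 ε ∈ signVectors (Fin N) 1, (signBridge ε k : ℝ) = k - (N + 1) := by
  have hk0 : k ≠ 0 := Nat.one_le_iff_ne_zero.1 (mem_Icc.1 hk).1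
  have hmean := card_mul_expect_sum_sign hne {i | ¬i.val + 1 < k}
  rw [Fintype.card_fin, card_filter_not_succ_lt hk, Int.cast_one] at hmean
  have hsuffix : ∀ ε ∈ signVectors (Fin N) 1,
      (signBridge ε k : ℝ) = -∑ i with ¬i.val + 1 < k, (ε i : ℝ) :=
    fun ε hε ↦ mod_cast signBridge_eq_neg_sum hε hk0
  rw [expect_congr rfl hsuffix, expect_neg_distrib]
  linear_combination -hmean

lemma expect_signBridge_mul_add_one (hne : (signVectors (Fin N) 1).Nonempty) (hN : N ≠ 1)
    {k : ℕ} (hk : k ∈ Icc 1 N) :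
    N * 𝔼 ε ∈ signVectors (Fin N) 1, (signBridge ε k * (signBridge ε k + 1) : ℝ) =
      (k - 1) * (N + 1 - k) := by
  have hk0 : k ≠ 0 := Nat.one_le_iff_ne_zero.1 (mem_Icc.1 hk).1
  have hN' : (N : ℝ) - 1 ≠ 0 := sub_ne_zero.2 (mod_cast hN)
  have hcross := card_mul_expect_sum_sign_mul_sum_sign hne
    (disjoint_filter_filter_not univ univ fun i : Fin N ↦ i.val + 1 < k)
  rw [Fintype.card_fin, card_filter_not_succ_lt hk, card_filter_succ_lt hk] at hcross
  have hfactor : ∀ ε ∈ signVectors (Fin N) 1, (signBridge ε k * (signBridge ε k + 1) : ℝ) =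
      -((∑ i with i.val + 1 < k, (ε i : ℝ)) * ∑ i with ¬i.val + 1 < k, (ε i : ℝ)) :=
    fun ε hε ↦ by
      rw [mul_comm, ← mul_neg]
      exact_mod_cast congrArg₂ (· * ·) (signBridge_add_one ε hk0) (signBridge_eq_neg_sum hε hk0)
  rw [expect_congr rfl hfactor, expect_neg_distrib]
  apply mul_left_cancel₀ hN'
  linear_combination -hcross

lemma IsBridge.two_mul_sum_downsteps {n : ℕ} {f : ℕ → ℤ} (hf : IsBridge n f) :
    2 * ∑ k ∈ Icc 1 (2 * n + 1) with f (k + 1) = f k - 1, f k =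
      ∑ k ∈ Icc 1 (2 * n + 1), f k + (n + 1) := by
  obtain ⟨-, h1, hlast, hstep, -⟩ := hf
  have h := four_mul_sum_downsteps (x := f) (show 1 ≤ 2 * n + 1 by omega)
    fun k hk ↦ hstep k (Nat.lt_succ_of_le (mem_Icc.1 hk).2)
  rw [hlast, h1, Nat.card_Icc] at h
  push_cast at h
  linarith

lemma IsBridge.two_mul_sum_sq_downsteps {n : ℕ} {f : ℕ → ℤ} (hf : IsBridge n f) :
    2 * ∑ k ∈ Icc 1 (2 * n + 1) with f (k + 1) = f k - 1, f k ^ 2 =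
      ∑ k ∈ Icc 1 (2 * n + 1), f k * (f k + 1) := by
  obtain ⟨-, h1, hlast, hstep, -⟩ := hf
  have h := six_mul_sum_sq_downsteps (x := f) (show 1 ≤ 2 * n + 1 by omega)
    fun k hk ↦ hstep k (Nat.lt_succ_of_le (mem_Icc.1 hk).2)
  rw [hlast, h1] at h
  linarith

lemma sum_Icc_id_sub_const (c : ℝ) (m : ℕ) :
    ∑ k ∈ Icc 1 m, ((k : ℝ) - c) = m * (m + 1) / 2 - m * c := by
  induction m with
  | zero => simp
  | succ m ih => rw [sum_Icc_succ_top (by omega), ih]; push_cast; ring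

lemma sum_Icc_sub_one_mul_const_sub (c : ℝ) (m : ℕ) :
    ∑ k ∈ Icc 1 m, ((k : ℝ) - 1) * (c - k) =
      m * (m - 1) * c / 2 - (m - 1) * m * (m + 1) / 3 := by
  induction m with
  | zero => simp
  | succ m ih => rw [sum_Icc_succ_top (by omega), ih]; push_cast; ring

variable {n : ℕ}

lemma expect_sum_downsteps (hne : (signVectors (Fin (2 * n + 1)) 1).Nonempty) :
    𝔼 ε ∈ signVectors (Fin (2 * n + 1)) 1,
      ∑ k ∈ Icc 1 (2 * n + 1) with signBridge ε (k + 1) = signBridge ε k - 1,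
        (signBridge ε k : ℝ) = 0 := by
  have hN : ((2 * n + 1 : ℕ) : ℝ) ≠ 0 := by positivity
  have htel : ∀ ε ∈ signVectors (Fin (2 * n + 1)) 1,
      2 * ∑ k ∈ Icc 1 (2 * n + 1) with signBridge ε (k + 1) = signBridge ε k - 1,
        (signBridge ε k : ℝ) = ∑ k ∈ Icc 1 (2 * n + 1), (signBridge ε k : ℝ) + (n + 1) :=
    fun ε hε ↦ mod_cast (isBridge_signBridge hε).two_mul_sum_downsteps
  have hsum : ∑ k ∈ Icc 1 (2 * n + 1),
      𝔼 ε ∈ signVectors (Fin (2 * n + 1)) 1, (signBridge ε k : ℝ) = -(n + 1) := by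
    apply mul_left_cancel₀ hN
    rw [mul_sum, sum_congr rfl fun k hk ↦ expect_signBridge hne hk, sum_Icc_id_sub_const]
    push_cast
    ring
  apply mul_left_cancel₀ (two_ne_zero (α := ℝ))
  rw [mul_expect, expect_congr rfl htel, expect_add_distrib, expect_sum_comm, hsum,
    expect_const hne, neg_add_cancel, mul_zero]

lemma expect_sum_sq_downsteps (hne : (signVectors (Fin (2 * n + 1)) 1).Nonempty) (hn : n ≠ 0) :
    𝔼 ε ∈ signVectors (Fin (2 * n + 1)) 1,
      ∑ k ∈ Icc 1 (2 * n + 1) with signBridge ε (k + 1) = signBridge ε k - 1,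
        (signBridge ε k : ℝ) ^ 2 = n * (n + 1) / 3 := by
  have hN : ((2 * n + 1 : ℕ) : ℝ) ≠ 0 := by positivity
  have htel : ∀ ε ∈ signVectors (Fin (2 * n + 1)) 1,
      2 * ∑ k ∈ Icc 1 (2 * n + 1) with signBridge ε (k + 1) = signBridge ε k - 1,
        (signBridge ε k : ℝ) ^ 2 =
          ∑ k ∈ Icc 1 (2 * n + 1), (signBridge ε k * (signBridge ε k + 1) : ℝ) :=
    fun ε hε ↦ mod_cast (isBridge_signBridge hε).two_mul_sum_sq_downsteps
  apply mul_left_cancel₀ (two_ne_zero (α := ℝ))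
  rw [mul_expect, expect_congr rfl htel, expect_sum_comm]
  apply mul_left_cancel₀ hN
  rw [mul_sum, sum_congr rfl fun k hk ↦ expect_signBridge_mul_add_one hne (by omega) hk,
    sum_Icc_sub_one_mul_const_sub]
  push_cast
  ring

lemma integral_comp_eq_expect_signBridge {Ω : Type*} [MeasurableSpace Ω] {P : Measure Ω}
    [IsProbabilityMeasure P] {b : Ω → ℕ → ℤ} (hbm : ∀ k : ℕ, Measurable fun ω ↦ b ω k)
    (hae : ∀ᵐ ω ∂P, IsBridge n (b ω))
    (hunif : ∀ f g : ℕ → ℤ, IsBridge n f → IsBridge n g →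
      P {ω | b ω = f} = P {ω | b ω = g}) (G : (ℕ → ℤ) → ℝ) :
    ∫ ω, G (b ω) ∂P = 𝔼 ε ∈ signVectors (Fin (2 * n + 1)) 1, G (signBridge ε) := by
  simp only [← mem_bridges] at hae hunif
  rw [integral_comp_eq_expect_of_uniform (measurable_pi_iff.2 hbm) hae
    (fun f hf g hg ↦ hunif f g hf hg), expect_bridges]

end Moments

/-- Section C.3 of the paper: moments of downsteps of a uniform bridge.
Let `(b₀,…,b_{2n+2})` be uniform among `±1`-step bridges with `b₀ = 0`, `b₁ = −1`,
`b_{2n+2} = 0`, and let `𝒟 = {k : 1 ≤ k ≤ 2n+1, b_{k+1} = b_k − 1}` be the set of nonzero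
downstep indices.  Then `E[Σ_{k∈𝒟} b_k] = 0` and `E[Σ_{k∈𝒟} b_k²] = n(n+1)/3`. -/
theorem bridge_downstep_moments
    {Ω : Type*} [MeasurableSpace Ω] (P : Measure Ω) [IsProbabilityMeasure P]
    (n : ℕ) (hn : 1 ≤ n) (b : Ω → ℕ → ℤ)
    (hbm : ∀ k : ℕ, Measurable fun ω => b ω k)
    (hae : ∀ᵐ ω ∂P, IsBridge n (b ω))
    (hunif : ∀ f g : ℕ → ℤ, IsBridge n f → IsBridge n g →
      P {ω | b ω = f} = P {ω | b ω = g}) :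
    (∫ ω, (∑ k ∈ (Finset.Icc 1 (2 * n + 1)).filter
        (fun k => b ω (k + 1) = b ω k - 1), (b ω k : ℝ)) ∂P) = 0
    ∧
    (∫ ω, (∑ k ∈ (Finset.Icc 1 (2 * n + 1)).filter
        (fun k => b ω (k + 1) = b ω k - 1), ((b ω k : ℝ)) ^ 2) ∂P) = n * (n + 1) / 3 := by
  have key := integral_comp_eq_expect_signBridge hbm hae hunif
  obtain ⟨ω₀, hω₀⟩ := hae.exists
  obtain ⟨ε, hε, -⟩ := hω₀.exists_signBridge_eq
  exact ⟨(key fun f ↦ ∑ k ∈ (Finset.Icc 1 (2 * n + 1)).filter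
      (fun k => f (k + 1) = f k - 1), (f k : ℝ)).trans (expect_sum_downsteps ⟨ε, hε⟩),
    (key fun f ↦ ∑ k ∈ (Finset.Icc 1 (2 * n + 1)).filter
      (fun k => f (k + 1) = f k - 1), (f k : ℝ) ^ 2).trans
      (expect_sum_sq_downsteps ⟨ε, hε⟩ (by omega))⟩
end
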